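/- arXiv:2512.01231 — 2 statements merged into one kernel-verified Lean document; each statement's English description precedes it below -/
import Mathlib

section
/- Fix ω > 0 and τ > 0. Let Q, λ : I → ℝ be differentiable functions on an open interval I with λ_t > 0 for all t ∈ I, and suppose that for all t ∈ I: (d/dt)(Q_t λ_t) = τ(ω Q_t + Q_t − Q_t λ_t) and (d/dt)(λ_t²) = 2τ(ω Q_t² λ_t + λ_t − λ_t²) + τ²(ω Q_t² + 1). Then for all t ∈ I, dQ_t/dt = (τ Q_t/λ_t)(ω − ω Q_t² − τ(ω Q_t² + 1)/(2 λ_t)). -/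
/-- if `Q_t λ_t` and `λ_t²` satisfy the evolution equations
`(d/dt)(Qλ) = τ(ωQ + Q − Qλ)` and `(d/dt)(λ²) = 2τ(ωQ²λ + λ − λ²) + τ²(ωQ² + 1)`
on an open interval with `λ_t > 0`, then the cosine similarity satisfies
`dQ/dt = (τQ/λ)(ω − ωQ² − τ(ωQ² + 1)/(2λ))`. -/
theorem cosine_similarity_ode (ω τ : ℝ) (hω : 0 < ω) (hτ : 0 < τ)
    (a b : ℝ) (Q lam : ℝ → ℝ)
    (hQ : ∀ t ∈ Set.Ioo a b, DifferentiableAt ℝ Q t)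
    (hlam : ∀ t ∈ Set.Ioo a b, DifferentiableAt ℝ lam t)
    (hpos : ∀ t ∈ Set.Ioo a b, 0 < lam t)
    (hQlam : ∀ t ∈ Set.Ioo a b,
      deriv (fun s => Q s * lam s) t = τ * (ω * Q t + Q t - Q t * lam t))
    (hlamSq : ∀ t ∈ Set.Ioo a b,
      deriv (fun s => (lam s) ^ 2) t
        = 2 * τ * (ω * (Q t) ^ 2 * lam t + lam t - (lam t) ^ 2)
          + τ ^ 2 * (ω * (Q t) ^ 2 + 1)) :
    ∀ t ∈ Set.Ioo a b,
      deriv Q t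
        = (τ * Q t / lam t) *
            (ω - ω * (Q t) ^ 2 - τ * (ω * (Q t) ^ 2 + 1) / (2 * lam t)) := by
  intro t ht
  have hl : lam t ≠ 0 := (hpos t ht).ne'
  have dQ := (hQ t ht).hasDerivAt
  have dl := (hlam t ht).hasDerivAt
  have h1 : deriv Q t * lam t + Q t * deriv lam t = τ * (ω * Q t + Q t - Q t * lam t) :=
    (dQ.mul dl).deriv.symm.trans (hQlam t ht)
  have h2 := hlamSq t ht
  rw [(dl.fun_pow 2).deriv] at h2
  norm_num at h2
  -- Eliminating `deriv lam t` by `2 λ (Q λ)' - Q (λ²)' = 2 λ² Q'` leaves the claim times `2 λ²`.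
  have key : 2 * lam t ^ 2 * deriv Q t =
      τ * Q t * (2 * lam t * (ω - ω * Q t ^ 2) - τ * (ω * Q t ^ 2 + 1)) := by
    linear_combination 2 * lam t * h1 - Q t * h2
  field_simp
  linear_combination key
end

section
/- Fix ω > 0 and τ > 0, let Q ∈ ℝ, and define λ*(Q) = ((ω Q² + 1) + √((ω Q² + 1)² + 2τ(ω Q² + 1)))/2. Then for every λ > 0: F_λ(Q, λ) > 0 if and only if λ < λ*(Q), F_λ(Q, λ) = 0 if and only if λ = λ*(Q), and F_λ(Q, λ) < 0 if and only if λ > λ*(Q). In particular, whenever 0 < λ ≤ ω Q² + 1 the norm parameter of INO-PCA is strictly increasing, and the norm dynamics cannot diverge since F_λ is negative for all λ above λ*(Q). -/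
/-!
For `λ > 0`, `λ F_λ(Q, λ) / τ` is a downward quadratic in `λ` whose roots are `λ*(Q)` and
`ωQ² + 1 - λ*(Q)`. The second root is negative since `λ*(Q) > ωQ² + 1` (`lt_lamStar`), so by the
factorization `Flam_eq_mul` the drift is a positive multiple of `λ*(Q) - λ`, which gives all the
sign statements.
-/

/-- Right-hand side of the limiting ODE for the norm parameter of INO-PCA. -/
noncomputable def Flam (ω τ Q lam : ℝ) : ℝ :=
  τ * (ω * Q ^ 2 + 1 - lam + τ * (ω * Q ^ 2 + 1) / (2 * lam))

/-- The unique positive zero of `λ ↦ F_λ(Q, λ)`. -/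
noncomputable def lamStar (ω τ Q : ℝ) : ℝ :=
  ((ω * Q ^ 2 + 1) +
    Real.sqrt ((ω * Q ^ 2 + 1) ^ 2 + 2 * τ * (ω * Q ^ 2 + 1))) / 2

/-- The drift factors through the roots of `λ² - aλ - τa/2`, where `a = ωQ² + 1`: one root is `λ*`,
the other is `a - λ*`. -/
lemma Flam_eq_mul {ω τ Q lam : ℝ} (hω : 0 < ω) (hτ : 0 < τ) (hlam : 0 < lam) :
    Flam ω τ Q lam =
      τ * (lam + (lamStar ω τ Q - (ω * Q ^ 2 + 1))) / lam * (lamStar ω τ Q - lam) := by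
  have hs := Real.sq_sqrt
    (show 0 ≤ (ω * Q ^ 2 + 1) ^ 2 + 2 * τ * (ω * Q ^ 2 + 1) by positivity)
  unfold Flam lamStar
  generalize √((ω * Q ^ 2 + 1) ^ 2 + 2 * τ * (ω * Q ^ 2 + 1)) = s at hs ⊢
  field_simp
  linear_combination -hs

lemma lt_lamStar {ω τ Q : ℝ} (hω : 0 < ω) (hτ : 0 < τ) :
    ω * Q ^ 2 + 1 < lamStar ω τ Q := by
  have ha : 0 < ω * Q ^ 2 + 1 := by positivity
  have hs : ω * Q ^ 2 + 1 < √((ω * Q ^ 2 + 1) ^ 2 + 2 * τ * (ω * Q ^ 2 + 1)) := by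
    rw [Real.lt_sqrt ha.le]
    have : 0 < 2 * τ * (ω * Q ^ 2 + 1) := by positivity
    linarith
  unfold lamStar
  linarith

/-- sign trichotomy of the norm-parameter drift `F_λ(Q, ·)` around
`λ*(Q)`; in particular the norm parameter of INO-PCA is strictly increasing
whenever `0 < λ ≤ ωQ² + 1`, and cannot diverge since `F_λ < 0` above `λ*(Q)`. -/
theorem norm_drift_trichotomy (ω τ : ℝ) (hω : 0 < ω) (hτ : 0 < τ) (Q : ℝ) :
    (∀ lam : ℝ, 0 < lam →
      (0 < Flam ω τ Q lam ↔ lam < lamStar ω τ Q) ∧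
      (Flam ω τ Q lam = 0 ↔ lam = lamStar ω τ Q) ∧
      (Flam ω τ Q lam < 0 ↔ lam > lamStar ω τ Q)) ∧
    (∀ lam : ℝ, 0 < lam → lam ≤ ω * Q ^ 2 + 1 → 0 < Flam ω τ Q lam) := by
  have hL := lt_lamStar (Q := Q) hω hτ
  have main : ∀ lam : ℝ, 0 < lam →
      (0 < Flam ω τ Q lam ↔ lam < lamStar ω τ Q) ∧
      (Flam ω τ Q lam = 0 ↔ lam = lamStar ω τ Q) ∧
      (Flam ω τ Q lam < 0 ↔ lam > lamStar ω τ Q) := by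
    intro lam hlam
    have hc : 0 < τ * (lam + (lamStar ω τ Q - (ω * Q ^ 2 + 1))) / lam :=
      div_pos (mul_pos hτ (by linarith)) hlam
    rw [Flam_eq_mul hω hτ hlam]
    refine ⟨?_, ?_, ?_⟩
    · rw [mul_pos_iff_of_pos_left hc, sub_pos]
    · rw [mul_eq_zero_iff_left hc.ne', sub_eq_zero, eq_comm]
    · rw [← not_le, mul_nonneg_iff_of_pos_left hc, sub_nonneg, not_le, gt_iff_lt]
  exact ⟨main, fun lam hlam hle => (main lam hlam).1.2 (hle.trans_lt hL)⟩
end
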